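/- For every probability mass function P on a finite set 𝒳×𝒴, the leakage of the primitive P is at least the leakage of the primitive given by its pair of dependent parts: Δ_{P_{X,Y}} ≥ Δ_{P_{X↘Y, Y↘X}}, where P_{X↘Y,Y↘X} is the joint distribution of (f_X(X), f_Y(Y)) for (X,Y) ~ P. -/

import Mathlib

open scoped BigOperators
open Matrix
open scoped ComplexOrder

attribute [local instance 10] Classical.propDecidable

noncomputable section

/-- Base-2 Shannon entropy of a finitely supported real function. -/
def shannonEntropy {α : Type*} [Fintype α] (p : α → ℝ) : ℝ :=
  -∑ x, p x * Real.logb 2 (p x)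

/-- Von Neumann entropy: base-2 Shannon entropy of the eigenvalue multiset. -/
def vonNeumannEntropy {n : Type*} [Fintype n] [DecidableEq n] (ρ : Matrix n n ℂ) : ℝ :=
  if h : ρ.IsHermitian then shannonEntropy h.eigenvalues else 0

/-- Rank-one outer product `|φ⟩⟨φ|`. -/
def outer {n : Type*} (φ : n → ℂ) : Matrix n n ℂ :=
  fun i j => φ i * (starRingEnd ℂ) (φ j)

/-- Partial trace over the first tensor factor. -/
def trLeft {m n : Type*} [Fintype m] (ρ : Matrix (m × n) (m × n) ℂ) : Matrix n n ℂ :=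
  fun i j => ∑ a, ρ (a, i) (a, j)

section primitives

variable {𝒰 𝒱 : Type*} [Fintype 𝒰] [Fintype 𝒱] [DecidableEq 𝒰] [DecidableEq 𝒱]

def margX (Q : 𝒰 × 𝒱 → ℝ) (u : 𝒰) : ℝ := ∑ v, Q (u, v)

def margY (Q : 𝒰 × 𝒱 → ℝ) (v : 𝒱) : ℝ := ∑ u, Q (u, v)

/-- Classical base-2 mutual information `I(U;V) = H(U) + H(V) − H(U,V)`. -/
def mutualInfo (Q : 𝒰 × 𝒱 → ℝ) : ℝ :=
  shannonEntropy (margX Q) + shannonEntropy (margY Q) - shannonEntropy Q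

/-- The regular embedding `|ψ_θ⟩ = Σ_{u,v} e^{iθ(u,v)} √Q(u,v) |u⟩⊗|v⟩` of `Q`. -/
def regEmbed (Q : 𝒰 × 𝒱 → ℝ) (θ : 𝒰 × 𝒱 → ℝ) : 𝒰 × 𝒱 → ℂ :=
  fun p => Complex.exp ((θ p : ℂ) * Complex.I) * (Real.sqrt (Q p) : ℂ)

/-- The leakage `Δ(ψ_θ) = S(tr_first |ψ_θ⟩⟨ψ_θ|) − I(U;V)` of the regular embedding. -/
def regLeakage (Q : 𝒰 × 𝒱 → ℝ) (θ : 𝒰 × 𝒱 → ℝ) : ℝ :=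
  vonNeumannEntropy (trLeft (outer (regEmbed Q θ))) - mutualInfo Q

/-- The leakage of the primitive `Q`: the minimal leakage over all regular embeddings. -/
def primLeakage (Q : 𝒰 × 𝒱 → ℝ) : ℝ := ⨅ θ : 𝒰 × 𝒱 → ℝ, regLeakage Q θ

end primitives

variable {𝒳 𝒴 : Type*} [Fintype 𝒳] [Fintype 𝒴] [DecidableEq 𝒳] [DecidableEq 𝒴]

/-- `f_X(x) = P_{Y|X=x}`, the dependent-part map of `X` w.r.t. `Y`. -/
def condYX (P : 𝒳 × 𝒴 → ℝ) (x : 𝒳) : 𝒴 → ℝ := fun y => P (x, y) / margX P x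

/-- `f_Y(y) = P_{X|Y=y}`, the dependent-part map of `Y` w.r.t. `X`. -/
def condXY (P : 𝒳 × 𝒴 → ℝ) (y : 𝒴) : 𝒳 → ℝ := fun x => P (x, y) / margY P y

/-- The joint distribution of the pair of dependent parts `(X↘Y, Y↘X) = (f_X(X), f_Y(Y))`,
supported on the (finite) images of `f_X` and `f_Y`. -/
def depPartDist (P : 𝒳 × 𝒴 → ℝ) :
    {u // u ∈ Finset.univ.image (condYX P)} × {v // v ∈ Finset.univ.image (condXY P)} → ℝ :=
  fun q => ∑ p ∈ Finset.univ.filter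
      (fun p : 𝒳 × 𝒴 => condYX P p.1 = q.1.1 ∧ condXY P p.2 = q.2.1), P p

section entropy

variable {m n : Type*} [Fintype m] [Fintype n] [DecidableEq m] [DecidableEq n]

lemma shannonEntropy_eq_sum_negMulLog {α : Type*} [Fintype α] (p : α → ℝ) :
    shannonEntropy p = (∑ x, Real.negMulLog (p x)) / Real.log 2 := by
  simp only [shannonEntropy, Real.logb, Real.negMulLog, ← Finset.sum_neg_distrib, Finset.sum_div]
  exact Finset.sum_congr rfl fun x _ => by ring

lemma vonNeumannEntropy_eq_sum_roots {A : Matrix n n ℂ} (hA : A.IsHermitian) :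
    vonNeumannEntropy A =
      (A.charpoly.roots.map fun z => Real.negMulLog z.re).sum / Real.log 2 := by
  rw [vonNeumannEntropy, dif_pos hA, shannonEntropy_eq_sum_negMulLog,
    hA.roots_charpoly_eq_eigenvalues, Multiset.map_map]
  rfl

/-- `A Aᴴ` and `Aᴴ A` have the same nonzero spectrum, hence the same entropy. -/
lemma vonNeumannEntropy_mul_conjTranspose_comm (A : Matrix m n ℂ) :
    vonNeumannEntropy (A * Aᴴ) = vonNeumannEntropy (Aᴴ * A) := by
  rw [vonNeumannEntropy_eq_sum_roots (isHermitian_mul_conjTranspose_self A),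
    vonNeumannEntropy_eq_sum_roots (isHermitian_conjTranspose_mul_self A)]
  have h := congrArg (fun p => (p.roots.map fun z => Real.negMulLog z.re).sum)
    (charpoly_mul_comm' A Aᴴ)
  beta_reduce at h
  rw [Polynomial.roots_mul
      (mul_ne_zero (pow_ne_zero _ Polynomial.X_ne_zero) (charpoly_monic _).ne_zero),
    Polynomial.roots_mul
      (mul_ne_zero (pow_ne_zero _ Polynomial.X_ne_zero) (charpoly_monic _).ne_zero)] at h
  simp only [Polynomial.roots_X_pow, Multiset.map_add, Multiset.sum_add, Multiset.map_nsmul,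
    Multiset.sum_nsmul, Multiset.map_singleton, Multiset.sum_singleton, Complex.zero_re,
    Real.negMulLog_zero, smul_zero, zero_add] at h
  rw [h]

lemma vonNeumannEntropy_transpose {A : Matrix n n ℂ} (hA : A.IsHermitian) :
    vonNeumannEntropy Aᵀ = vonNeumannEntropy A := by
  rw [vonNeumannEntropy_eq_sum_roots hA, vonNeumannEntropy_eq_sum_roots hA.transpose,
    charpoly_transpose]

lemma vonNeumannEntropy_nonneg {A : Matrix n n ℂ} (hA : A.PosSemidef) (htr : A.trace = 1) :
    0 ≤ vonNeumannEntropy A := by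
  have hsum : ∑ i, hA.1.eigenvalues i = 1 := by
    have h := hA.1.trace_eq_sum_eigenvalues
    rw [htr] at h
    have h' := congrArg Complex.re h
    simpa using h'.symm
  rw [vonNeumannEntropy, dif_pos hA.1, shannonEntropy_eq_sum_negMulLog]
  refine div_nonneg (Finset.sum_nonneg fun i _ => Real.negMulLog_nonneg (hA.eigenvalues_nonneg i) ?_)
    (Real.log_nonneg one_le_two)
  rw [← hsum]
  exact Finset.single_le_sum (fun j _ => hA.eigenvalues_nonneg j) (Finset.mem_univ i)

lemma sum_normSq_row_eq_one {W : Matrix n n ℂ} (hW : W * Wᴴ = 1) (i : n) :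
    ∑ j, Complex.normSq (W i j) = 1 := by
  have h := congrFun (congrFun hW i) i
  simp only [mul_apply, conjTranspose_apply, one_apply_eq, Complex.star_def,
    Complex.mul_conj] at h
  exact_mod_cast h

/-- The entropy of a density matrix is at most the Shannon entropy of its diagonal in any
orthonormal basis. -/
lemma vonNeumannEntropy_le_sum_diag {A : Matrix n n ℂ} (hA : A.PosSemidef) {U : Matrix n n ℂ}
    (hU : Uᴴ * U = 1) :
    vonNeumannEntropy A ≤ (∑ i, Real.negMulLog ((Uᴴ * A * U) i i).re) / Real.log 2 := by
  rw [vonNeumannEntropy, dif_pos hA.1, shannonEntropy_eq_sum_negMulLog]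
  refine div_le_div_of_nonneg_right ?_ (Real.log_nonneg one_le_two)
  set V : Matrix n n ℂ := hA.1.eigenvectorUnitary.1 with hV
  set l := hA.1.eigenvalues with hl
  have hspec : A = V * diagonal (fun i => (l i : ℂ)) * Vᴴ := hA.1.spectral_theorem
  have hVV : Vᴴ * V = 1 := UnitaryGroup.star_mul_self hA.1.eigenvectorUnitary
  have hVV' : V * Vᴴ = 1 := mul_eq_one_comm.mp hVV
  set W := Uᴴ * V with hW
  have hWW : W * Wᴴ = 1 := by
    rw [hW, conjTranspose_mul, conjTranspose_conjTranspose, Matrix.mul_assoc,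
      ← Matrix.mul_assoc V, hVV', Matrix.one_mul, hU]
  have hcol (j : n) : ∑ i, Complex.normSq (W i j) = 1 := by
    have h := sum_normSq_row_eq_one (W := Wᴴ)
      (by rw [conjTranspose_conjTranspose]; exact mul_eq_one_comm.mp hWW) j
    simpa using h
  have hdiag (i : n) : ((Uᴴ * A * U) i i).re = ∑ j, Complex.normSq (W i j) • l j := by
    have : Uᴴ * A * U = W * diagonal (fun i => (l i : ℂ)) * Wᴴ := by
      rw [hW, hspec, conjTranspose_mul, conjTranspose_conjTranspose]
      simp only [Matrix.mul_assoc]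
    rw [this, mul_apply, Complex.re_sum]
    refine Finset.sum_congr rfl fun j _ => ?_
    rw [mul_diagonal, conjTranspose_apply, Complex.star_def, mul_right_comm, Complex.mul_conj]
    norm_cast
  calc ∑ j, Real.negMulLog (l j)
      = ∑ i, ∑ j, Complex.normSq (W i j) • Real.negMulLog (l j) := by
        rw [Finset.sum_comm]
        exact Finset.sum_congr rfl fun j _ => by rw [← Finset.sum_smul, hcol, one_smul]
    _ ≤ ∑ i, Real.negMulLog ((Uᴴ * A * U) i i).re := by
        refine Finset.sum_le_sum fun i _ => ?_
        rw [hdiag]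
        exact Real.concaveOn_negMulLog.le_map_sum (fun j _ => Complex.normSq_nonneg _)
          (sum_normSq_row_eq_one hWW i) fun j _ => hA.eigenvalues_nonneg j

/-- Concavity of the von Neumann entropy. -/
lemma sum_mul_vonNeumannEntropy_le {ι : Type*} [Fintype ι] {w : ι → ℝ} (hw : ∀ s, 0 ≤ w s)
    (hw1 : ∑ s, w s = 1) {A : ι → Matrix n n ℂ} (hA : ∀ s, (A s).PosSemidef) :
    ∑ s, w s * vonNeumannEntropy (A s) ≤ vonNeumannEntropy (∑ s, (w s : ℂ) • A s) := by
  set B := ∑ s, (w s : ℂ) • A s with hB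
  have hBpsd : B.PosSemidef :=
    posSemidef_sum _ fun s _ => (hA s).smul (by exact_mod_cast hw s)
  set U : Matrix n n ℂ := hBpsd.1.eigenvectorUnitary.1 with hU
  have hUU : Uᴴ * U = 1 := UnitaryGroup.star_mul_self hBpsd.1.eigenvectorUnitary
  have hspec : B = U * diagonal (fun i => (hBpsd.1.eigenvalues i : ℂ)) * Uᴴ :=
    hBpsd.1.spectral_theorem
  have hdiag (i : n) : hBpsd.1.eigenvalues i = ∑ s, w s • ((Uᴴ * A s * U) i i).re := by
    have h1 : Uᴴ * B * U = diagonal (fun i => (hBpsd.1.eigenvalues i : ℂ)) := by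
      conv_lhs => rw [hspec]
      rw [Matrix.mul_assoc, Matrix.mul_assoc, hUU, Matrix.mul_one, ← Matrix.mul_assoc, hUU,
        Matrix.one_mul]
    have h2 : Uᴴ * B * U = ∑ s, (w s : ℂ) • (Uᴴ * A s * U) := by
      simp [hB, Finset.mul_sum, Finset.sum_mul]
    have h3 := congrArg Complex.re (congrFun (congrFun (h1.symm.trans h2) i) i)
    simpa [Matrix.sum_apply] using h3
  have hnn (s : ι) (i : n) : 0 ≤ ((Uᴴ * A s * U) i i).re :=
    (Complex.nonneg_iff.mp (((hA s).conjTranspose_mul_mul_same U).diag_nonneg)).1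
  calc ∑ s, w s * vonNeumannEntropy (A s)
      ≤ ∑ s, w s * ((∑ i, Real.negMulLog ((Uᴴ * A s * U) i i).re) / Real.log 2) :=
        Finset.sum_le_sum fun s _ =>
          mul_le_mul_of_nonneg_left (vonNeumannEntropy_le_sum_diag (hA s) hUU) (hw s)
    _ = (∑ i, ∑ s, w s • Real.negMulLog ((Uᴴ * A s * U) i i).re) / Real.log 2 := by
        rw [Finset.sum_comm, Finset.sum_div]
        exact Finset.sum_congr rfl fun s _ => by
          simp only [smul_eq_mul, ← Finset.mul_sum, mul_div_assoc]
    _ ≤ vonNeumannEntropy B := by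
        rw [vonNeumannEntropy, dif_pos hBpsd.1, shannonEntropy_eq_sum_negMulLog]
        refine div_le_div_of_nonneg_right (Finset.sum_le_sum fun i _ => ?_)
          (Real.log_nonneg one_le_two)
        rw [hdiag]
        exact Real.concaveOn_negMulLog.le_map_sum (fun s _ => hw s) hw1 fun s _ => hnn s i

/-- In a convex decomposition of a density matrix, some member has at most average entropy. -/
lemma exists_vonNeumannEntropy_le {ι : Type*} [Fintype ι] {w : ι → ℝ} (hw : ∀ s, 0 ≤ w s)
    (hw1 : ∑ s, w s = 1) {A : ι → Matrix n n ℂ} (hA : ∀ s, (A s).PosSemidef) :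
    ∃ s, vonNeumannEntropy (A s) ≤ vonNeumannEntropy (∑ s, (w s : ℂ) • A s) := by
  by_contra! h
  set E := vonNeumannEntropy (∑ s, (w s : ℂ) • A s)
  obtain ⟨s, -, hs⟩ : ∃ s ∈ Finset.univ, 0 < w s := by
    by_contra! h0
    linarith [Finset.sum_nonpos h0]
  have hlt : ∑ s, w s * E < ∑ s, w s * vonNeumannEntropy (A s) :=
    Finset.sum_lt_sum (fun t _ => mul_le_mul_of_nonneg_left (h t).le (hw t))
      ⟨s, Finset.mem_univ s, mul_lt_mul_of_pos_left (h s) hs⟩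
  rw [← Finset.sum_mul, hw1, one_mul] at hlt
  exact absurd (sum_mul_vonNeumannEntropy_le hw hw1 hA) hlt.not_ge

end entropy

section product

variable {U : Type*} [Fintype U] [DecidableEq U] {κ : U → Type*} [∀ u, Fintype (κ u)]
  {R : Type*} [CommSemiring R]

/-- Marginals of a product distribution. -/
lemma sum_pi_prod_mul_apply {w : ∀ u, κ u → R} (hw : ∀ u, ∑ k, w u k = 1)
    (g : ∀ u, κ u → R) (u₀ : U) :
    ∑ s : ∀ u, κ u, (∏ u, w u (s u)) * g u₀ (s u₀) = ∑ k, w u₀ k * g u₀ k := by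
  have h : ∏ u, ∑ k, w u k * (if u = u₀ then g u k else 1) =
      ∑ s : ∀ u, κ u, ∏ u, w u (s u) * (if u = u₀ then g u (s u) else 1) := by
    rw [Finset.prod_univ_sum, Fintype.piFinset_univ]
  rw [Finset.prod_eq_single u₀ (fun u _ hu => by simp [hu, hw]) (by simp)] at h
  simpa only [Finset.prod_mul_distrib, Finset.prod_ite_eq', Finset.mem_univ, if_true] using h.symm

end product

section leakage

variable {X Y U : Type*} [Fintype X] [Fintype Y] [Fintype U]

lemma trLeft_outer_eq_mul_conjTranspose {X Y : Type*} [Fintype X] (ψ : X × Y → ℂ) :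
    trLeft (outer ψ) = (of fun y x => ψ (x, y)) * (of fun y x => ψ (x, y))ᴴ := by
  ext i j
  simp [trLeft, outer, mul_apply]

lemma posSemidef_trLeft_outer (ψ : X × Y → ℂ) : (trLeft (outer ψ)).PosSemidef := by
  rw [trLeft_outer_eq_mul_conjTranspose]
  exact posSemidef_self_mul_conjTranspose _

lemma trace_trLeft_outer_regEmbed {Q : X × Y → ℝ} (hQ : ∀ q, 0 ≤ Q q) (hQ1 : ∑ q, Q q = 1)
    (θ : X × Y → ℝ) : (trLeft (outer (regEmbed Q θ))).trace = 1 := by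
  have h (p : X × Y) : regEmbed Q θ p * (starRingEnd ℂ) (regEmbed Q θ p) = (Q p : ℂ) := by
    rw [Complex.mul_conj, regEmbed, Complex.normSq_mul, Complex.normSq_eq_norm_sq,
      Complex.norm_exp_ofReal_mul_I, Complex.normSq_ofReal, Real.mul_self_sqrt (hQ p)]
    simp
  simp only [trace, diag_apply, trLeft, outer, h]
  rw [Finset.sum_comm, ← Fintype.sum_prod_type']
  exact_mod_cast hQ1

lemma shannonEntropy_comp_equiv {α β : Type*} [Fintype α] [Fintype β] (e : α ≃ β) (p : β → ℝ) :
    shannonEntropy (p ∘ e) = shannonEntropy p := by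
  simp only [shannonEntropy]
  exact congrArg _ (e.sum_comp fun x => p x * Real.logb 2 (p x))

lemma sum_eq_sum_fiber [DecidableEq U] {M : Type*} [AddCommMonoid M] (f : X → U) (g : X → M) :
    ∑ x, g x = ∑ u, ∑ k : {x // f x = u}, g k := by
  rw [← (Equiv.sigmaFiberEquiv f).sum_comp, Fintype.sum_sigma]
  rfl

lemma mutualInfo_eq_of_split [DecidableEq U] {P : X × Y → ℝ} {R : U × Y → ℝ} {f : X → U}
    {w : X → ℝ}
    (hw1 : ∀ u, ∑ k : {x // f x = u}, w k = 1)
    (hP : ∀ x y, P (x, y) = w x * R (f x, y)) : mutualInfo P = mutualInfo R := by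
  have hX (x : X) : margX P x = w x * margX R (f x) := by
    simp only [margX, hP, Finset.mul_sum]
  have hfib (g : U → ℝ) : ∑ x, w x * g (f x) = ∑ u, g u := by
    rw [sum_eq_sum_fiber f]
    refine Finset.sum_congr rfl fun u _ => ?_
    rw [← one_mul (g u), ← hw1 u, Finset.sum_mul]
    exact Finset.sum_congr rfl fun k _ => by rw [k.2]
  have hY : margY P = margY R := by
    ext y
    simp only [margY, hP]
    exact hfib fun u => R (u, y)
  have hHX : ∑ x, Real.negMulLog (margX P x) =
      ∑ x, margX R (f x) * Real.negMulLog (w x) + ∑ u, Real.negMulLog (margX R u) := by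
    simp only [hX, Real.negMulLog_mul, Finset.sum_add_distrib]
    rw [hfib fun u => Real.negMulLog (margX R u)]
  have hHXY : ∑ p, Real.negMulLog (P p) =
      ∑ x, margX R (f x) * Real.negMulLog (w x) + ∑ q, Real.negMulLog (R q) := by
    simp only [Fintype.sum_prod_type, hP, Real.negMulLog_mul, Finset.sum_add_distrib,
      ← Finset.sum_mul, ← Finset.mul_sum]
    rw [hfib fun u => ∑ y, Real.negMulLog (R (u, y))]
    rfl
  simp only [mutualInfo, shannonEntropy_eq_sum_negMulLog, hHX, hHXY, hY]
  ring

variable [DecidableEq Y]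

lemma bddBelow_range_regLeakage {Q : X × Y → ℝ} (hQ : ∀ q, 0 ≤ Q q) (hQ1 : ∑ q, Q q = 1) :
    BddBelow (Set.range (regLeakage Q)) := by
  refine ⟨-mutualInfo Q, ?_⟩
  rintro _ ⟨θ, rfl⟩
  have := vonNeumannEntropy_nonneg (posSemidef_trLeft_outer (regEmbed Q θ))
    (trace_trLeft_outer_regEmbed hQ hQ1 θ)
  rw [regLeakage]
  linarith

variable [DecidableEq U]

/-- If `P` is obtained from `R` by splitting every symbol `u` at random into the symbols of
the fiber of `f` over `u`, then `P` leaks at least as much as `R`. -/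
lemma primLeakage_le_of_split {P : X × Y → ℝ} {R : U × Y → ℝ} {f : X → U} {w : X → ℝ}
    (hR : ∀ q, 0 ≤ R q) (hR1 : ∑ q, R q = 1) (hw : ∀ x, 0 ≤ w x)
    (hw1 : ∀ u, ∑ k : {x // f x = u}, w k = 1)
    (hP : ∀ x y, P (x, y) = w x * R (f x, y)) : primLeakage R ≤ primLeakage P := by
  refine le_ciInf fun θ => ?_
  let W (s : ∀ u, {x // f x = u}) : ℝ := ∏ u, w (s u)
  let θ' (s : ∀ u, {x // f x = u}) (q : U × Y) : ℝ := θ (s q.1, q.2)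
  have hW1 : ∑ s, W s = 1 := by
    have h := Finset.prod_univ_sum (fun u => (Finset.univ : Finset {x // f x = u}))
      fun _ k => w k
    rw [Fintype.piFinset_univ] at h
    rw [← h]
    exact Finset.prod_eq_one fun u _ => hw1 u
  have hmix : ∑ s, (W s : ℂ) • trLeft (outer (regEmbed R (θ' s))) =
      trLeft (outer (regEmbed P θ)) := by
    ext i j
    let φ (x : X) (y : Y) : ℂ :=
      Complex.exp ((θ (x, y) : ℂ) * Complex.I) * (Real.sqrt (R (f x, y)) : ℂ)
    let g (x : X) : ℂ := φ x i * (starRingEnd ℂ) (φ x j)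
    have hg (x : X) : regEmbed P θ (x, i) * (starRingEnd ℂ) (regEmbed P θ (x, j)) =
        (w x : ℂ) * g x := by
      have hφ (y : Y) : regEmbed P θ (x, y) = (Real.sqrt (w x) : ℂ) * φ x y := by
        simp only [regEmbed, hP, Real.sqrt_mul (hw x), φ, Complex.ofReal_mul]
        ring
      have hsq : (w x : ℂ) = (Real.sqrt (w x) : ℂ) * (Real.sqrt (w x) : ℂ) := by
        exact_mod_cast (Real.mul_self_sqrt (hw x)).symm
      rw [hφ, hφ, map_mul, Complex.conj_ofReal, hsq]
      ring
    have hφ' (s : ∀ u, {x // f x = u}) (u : U) (y : Y) :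
        regEmbed R (θ' s) (u, y) = φ (s u) y := by
      simp only [regEmbed, φ, θ', (s u).2]
    have hwC (u : U) : ∑ k : {x // f x = u}, (w k : ℂ) = 1 := by exact_mod_cast hw1 u
    simp only [Matrix.sum_apply, Matrix.smul_apply, smul_eq_mul, trLeft, outer, hg, hφ', W,
      Complex.ofReal_prod, Finset.mul_sum]
    rw [Finset.sum_comm, sum_eq_sum_fiber f]
    exact Finset.sum_congr rfl fun u _ =>
      sum_pi_prod_mul_apply (κ := fun u => {x // f x = u}) (w := fun _ k => (w k : ℂ)) hwC
        (fun _ k => g k) u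
  obtain ⟨s, hs⟩ := exists_vonNeumannEntropy_le (w := W)
    (fun s => Finset.prod_nonneg fun u _ => hw _) hW1
    fun s => posSemidef_trLeft_outer (regEmbed R (θ' s))
  rw [hmix] at hs
  refine (ciInf_le (bddBelow_range_regLeakage hR hR1) (θ' s)).trans ?_
  rw [regLeakage, regLeakage, mutualInfo_eq_of_split hw1 hP]
  linarith

/-- Merging first-party symbols with proportional rows does not increase the leakage. -/
lemma primLeakage_le_of_proportional {P : X × Y → ℝ} {R : U × Y → ℝ} {f : X → U}
    (hf : Function.Surjective f) {a : X → ℝ} {k : U → Y → ℝ} (hP0 : ∀ p, 0 ≤ P p)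
    (hP1 : ∑ p, P p = 1) (ha : ∀ x, 0 ≤ a x) (hP : ∀ x y, P (x, y) = a x * k (f x) y)
    (hR : ∀ u y, R (u, y) = ∑ x : {x // f x = u}, P (x, y)) :
    primLeakage R ≤ primLeakage P := by
  let A (u : U) : ℝ := ∑ x : {x // f x = u}, a x
  have hRA (u : U) (y : Y) : R (u, y) = A u * k u y := by
    rw [hR, Finset.sum_mul]
    exact Finset.sum_congr rfl fun x _ => by rw [hP, x.2]
  have hA (u : U) : 0 ≤ A u := Finset.sum_nonneg fun x _ => ha x
  refine primLeakage_le_of_split (f := f)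
    (w := fun x => if A (f x) = 0 then ((Fintype.card {x' // f x' = f x} : ℝ))⁻¹
      else a x / A (f x)) ?_ ?_ ?_ ?_ ?_
  · rintro ⟨u, y⟩
    rw [hR]
    exact Finset.sum_nonneg fun x _ => hP0 _
  · rw [← hP1, Fintype.sum_prod_type_right, Fintype.sum_prod_type_right]
    refine Finset.sum_congr rfl fun y _ => ?_
    rw [sum_eq_sum_fiber f]
    exact Finset.sum_congr rfl fun u _ => hR u y
  · intro x
    split_ifs
    · positivity
    · exact div_nonneg (ha x) (hA _)
  · intro u
    obtain ⟨x₀, hx₀⟩ := hf u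
    have : Nonempty {x // f x = u} := ⟨⟨x₀, hx₀⟩⟩
    calc _ = ∑ x : {x // f x = u}, if A u = 0 then ((Fintype.card {x' // f x' = u} : ℝ))⁻¹
          else a x / A u := by
          refine Finset.sum_congr rfl ?_
          rintro ⟨x, rfl⟩ _
          rfl
      _ = 1 := by
          split_ifs with h
          · simp
          · rw [← Finset.sum_div]
            exact div_self h
  · intro x y
    rw [hRA, hP]
    split_ifs with h
    · have : a x = 0 :=
        (Finset.sum_eq_zero_iff_of_nonneg
          fun (z : {x' // f x' = f x}) _ => ha z).mp h ⟨x, rfl⟩ (Finset.mem_univ _)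
      simp [h, this]
    · field_simp

variable [DecidableEq X]

lemma vonNeumannEntropy_trLeft_outer_comp_swap (ψ : X × Y → ℂ) :
    vonNeumannEntropy (trLeft (outer (ψ ∘ Prod.swap))) =
      vonNeumannEntropy (trLeft (outer ψ)) := by
  set N : Matrix Y X ℂ := of fun y x => ψ (x, y) with hN
  have h : trLeft (outer (ψ ∘ Prod.swap)) = (Nᴴ * N)ᵀ := by
    ext i j
    simp [trLeft, outer, mul_apply, hN, mul_comm]
  rw [h, vonNeumannEntropy_transpose (isHermitian_conjTranspose_mul_self N),
    ← vonNeumannEntropy_mul_conjTranspose_comm, trLeft_outer_eq_mul_conjTranspose]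

lemma primLeakage_comp_swap (Q : X × Y → ℝ) :
    primLeakage (Q ∘ Prod.swap) = primLeakage Q := by
  refine (Equiv.iInf_congr ((Equiv.prodComm Y X).arrowCongr (Equiv.refl ℝ)).symm fun θ => ?_).symm
  have h1 : regEmbed (Q ∘ Prod.swap) (((Equiv.prodComm Y X).arrowCongr (Equiv.refl ℝ)).symm θ) =
      regEmbed Q θ ∘ Prod.swap := rfl
  have h2 : mutualInfo (Q ∘ Prod.swap) = mutualInfo Q := by
    have h3 : shannonEntropy (Q ∘ Prod.swap) = shannonEntropy Q :=
      shannonEntropy_comp_equiv (Equiv.prodComm Y X) Q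
    have h4 : margX (Q ∘ Prod.swap) = margY Q := rfl
    have h5 : margY (Q ∘ Prod.swap) = margX Q := rfl
    rw [mutualInfo, mutualInfo, h3, h4, h5, add_comm (shannonEntropy (margY Q))]
  rw [regLeakage, regLeakage, h1, h2, vonNeumannEntropy_trLeft_outer_comp_swap]

end leakage

lemma margX_mul_condYX {X Y : Type*} [Fintype Y] {P : X × Y → ℝ} (hP0 : ∀ p, 0 ≤ P p)
    (x : X) (y : Y) : margX P x * condYX P x y = P (x, y) := by
  rw [condYX]
  by_cases h : margX P x = 0
  · rw [h, zero_mul]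
    exact ((Finset.sum_eq_zero_iff_of_nonneg fun z _ => hP0 _).mp h y (Finset.mem_univ _)).symm
  · field_simp

lemma margY_mul_condXY {X Y : Type*} [Fintype X] {P : X × Y → ℝ} (hP0 : ∀ p, 0 ≤ P p)
    (y : Y) (x : X) : margY P y * condXY P y x = P (x, y) :=
  margX_mul_condYX (P := P ∘ Prod.swap) (fun _ => hP0 _) y x

/-- `Δ_{P_{X,Y}} ≥ Δ_{P_{X↘Y, Y↘X}}`. -/
theorem primLeakage_ge_depPart
    (P : 𝒳 × 𝒴 → ℝ) (hP0 : ∀ p, 0 ≤ P p) (hP1 : ∑ p, P p = 1) :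
    primLeakage P ≥ primLeakage (depPartDist P) := by
  let f (x : 𝒳) : {u // u ∈ Finset.univ.image (condYX P)} :=
    ⟨condYX P x, Finset.mem_image_of_mem _ (Finset.mem_univ x)⟩
  let g (y : 𝒴) : {v // v ∈ Finset.univ.image (condXY P)} :=
    ⟨condXY P y, Finset.mem_image_of_mem _ (Finset.mem_univ y)⟩
  have hf : Function.Surjective f := by
    rintro ⟨u, hu⟩
    obtain ⟨x, -, rfl⟩ := Finset.mem_image.mp hu
    exact ⟨x, rfl⟩
  have hg : Function.Surjective g := by
    rintro ⟨v, hv⟩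
    obtain ⟨y, -, rfl⟩ := Finset.mem_image.mp hv
    exact ⟨y, rfl⟩
  let R (q : {u // u ∈ Finset.univ.image (condYX P)} × 𝒴) : ℝ :=
    ∑ x : {x // f x = q.1}, P (x, q.2)
  have hR0 (q) : 0 ≤ R q := Finset.sum_nonneg fun _ _ => hP0 _
  have hR1 : ∑ q, R q = 1 := by
    rw [← hP1, Fintype.sum_prod_type_right, Fintype.sum_prod_type_right]
    exact Finset.sum_congr rfl fun y _ => (sum_eq_sum_fiber f fun x => P (x, y)).symm
  have hrow : primLeakage R ≤ primLeakage P :=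
    primLeakage_le_of_proportional hf (a := margX P) (k := fun u y => u.1 y) hP0 hP1
      (fun x => Finset.sum_nonneg fun _ _ => hP0 _)
      (fun x y => (margX_mul_condYX hP0 x y).symm) fun _ _ => rfl
  have hcol : primLeakage (depPartDist P ∘ Prod.swap) ≤ primLeakage (R ∘ Prod.swap) := by
    refine primLeakage_le_of_proportional hg (a := margY P)
      (k := fun v u => ∑ x : {x // f x = u}, v.1 x) (fun _ => hR0 _) ?_
      (fun y => Finset.sum_nonneg fun _ _ => hP0 _) ?_ ?_
    · rw [← hR1]
      exact (Equiv.prodComm _ _).sum_comp R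
    · intro y u
      rw [Finset.mul_sum]
      exact Finset.sum_congr rfl fun x _ => (margY_mul_condXY hP0 y x).symm
    · intro v u
      simp only [Function.comp_apply, Prod.swap_prod_mk, R, depPartDist]
      rw [Finset.sum_filter, Fintype.sum_prod_type_right,
        ← Finset.sum_subtype (Finset.univ.filter fun y => g y = v) (by simp)
          fun y => ∑ x : {x // f x = u}, P (x, y), Finset.sum_filter]
      refine Finset.sum_congr rfl fun y _ => ?_
      rw [← Finset.sum_subtype (Finset.univ.filter fun x => f x = u) (by simp)
        fun x => P (x, y), Finset.sum_filter]
      by_cases h : g y = v <;> simp [f, g, Subtype.ext_iff] at h ⊢ <;> simp [h]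
  rw [primLeakage_comp_swap, primLeakage_comp_swap] at hcol
  exact hcol.trans hrow

end
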